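/- arXiv:2107.14097 — 2 statements merged into one kernel-verified Lean document; each statement's English description precedes it below -/
import Mathlib

section
/- Correctness of the reduction for Theorem 3 (NP-hardness of constructive coalitional manipulation under Borda): let X_1 ≤ … ≤ X_n be positive integers with Σ_{i=1}^n X_i = n(n+1). Let O consist of the 2n+4 outcomes x_1,…,x_n, y_1,…,y_{n+1}, a, b, c, with a fixed tie-breaking order that prefers a to b and to every x_i. Let p⃗ be any profile of Borda votes whose total scores are: each y_j gets 4n+7+C, b gets 4n+6+C, each x_i gets 4n+6+C−X_i, a gets C, and c gets z ≤ C (for some constant C), so that F(p⃗) = (y_1,…,y_{n+1}, b, x_1,…,x_n, a, c). Let p_o = (x_1,…,x_n, b, a, c, y_1,…,y_{n+1}). Then there exist two Borda manipulator votes p⃗_M such that RC(F(p⃗ ∪ p⃗_M), p_o) = {a} if and only if there exist permutations σ and π of {1,…,n} such that σ(i) + π(i) = X_i for all 1 ≤ i ≤ n. -/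
open Finset
open scoped Classical

variable {O : Type*} [Fintype O] [DecidableEq O]

/-- A vote is a strict total order on the outcome set `O`, represented by its position
function: `p o` is the number of outcomes that `o` is preferred over, so the most
preferred outcome has position `m - 1` and the least preferred position `0`. -/
def IsVote (p : O → ℕ) : Prop :=
  Function.Injective p ∧ ∀ o : O, p o < Fintype.card O

/-- The total score of candidate `c` under the scoring vector `sc` (`sc j` is the number
of points awarded to the candidate at position `j`) for the profile `P`. -/
def score (sc : ℕ → ℤ) (P : List (O → ℕ)) (c : O) : ℤ :=
  (P.map fun q => sc (q c)).sum

/-- The positional scoring rule used as a social welfare function: candidates are ordered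
by decreasing total score, ties being broken by the fixed strict tie-breaking order `tb`
(a smaller `tb`-value means preferred by the tie-breaking order).  The output is again a
position function: the position of `c` is the number of candidates ranked below `c`. -/
def swf (sc : ℕ → ℤ) (tb : O → ℕ) (P : List (O → ℕ)) : O → ℕ := fun c =>
  (univ.filter fun c' =>
      score sc P c' < score sc P c ∨ (score sc P c' = score sc P c ∧ tb c < tb c')).card

/-- `topSet p j = A^j(p)`, the set of the `j` most preferred outcomes of `p`. -/
def topSet (p : O → ℕ) (j : ℕ) : Finset O :=
  univ.filter fun o => Fintype.card O - j ≤ p o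

/-- The least `j ≥ 1` for which `A^j(p_t) ∩ A^j(p_o)` is nonempty, i.e. the iteration at
which the Rational Compromise rule terminates. -/
noncomputable def rcIndex (pt po : O → ℕ) : ℕ :=
  sInf {j | 1 ≤ j ∧ (topSet pt j ∩ topSet po j).Nonempty}

/-- The Rational Compromise bargaining rule: `A^j(p_t) ∩ A^j(p_o)` for the least `j ≥ 1`
making this intersection nonempty. -/
noncomputable def RC (pt po : O → ℕ) : Finset O :=
  topSet pt (rcIndex pt po) ∩ topSet po (rcIndex pt po)

/-- The `n` most preferred members of `S` according to the ranking `r`. -/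
def topWithin (r : O → ℕ) (S : Finset O) (n : ℕ) : Finset O :=
  S.filter fun o => (S.filter fun o' => r o < r o').card < n

/-- The `n` least preferred members of `S` according to the ranking `r`. -/
def botWithin (r : O → ℕ) (S : Finset O) (n : ℕ) : Finset O :=
  S.filter fun o => (S.filter fun o' => r o' < r o).card < n

/-- The vote built by the algorithms from a current ranking `r` and a set `H`:
the members of `H` occupy the `|H|` highest positions in reverse order of `r`
(the `r`-least preferred member of `H` is placed highest), and the members of `O ∖ H`
occupy the remaining lowest positions in reverse order of `r` (the `r`-most preferred
of them is placed lowest). -/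
def buildVote (r : O → ℕ) (H : Finset O) : O → ℕ := fun o =>
  if o ∈ H then Fintype.card O - H.card + (H.filter fun h => r o < r h).card
  else (univ.filter fun c => c ∉ H ∧ r o < r c).card

/-- `H^i` for the constructive algorithms: the preferred outcome `p` together with the
`i - 1` most preferred outcomes of `p_t` that do not belong to `A^i(p_o)`. -/
def Hset (pt po : O → ℕ) (p : O) (i : ℕ) : Finset O :=
  insert p (topWithin pt ((univ \ topSet po i).erase p) (i - 1))

/-- `H^i` for the destructive algorithms: `p*`, the most preferred outcome of `p_t` other
than `e` that belongs to `A^i(p_o)`, together with the `i - 1` most preferred outcomes of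
`p_t` other than `e` and `p*`. -/
def HsetD (pt po : O → ℕ) (e : O) (i : ℕ) : Finset O :=
  topWithin pt ((topSet po i).erase e) 1 ∪
    topWithin pt ((univ.erase e) \ topWithin pt ((topSet po i).erase e) 1) (i - 1)

/-- The manipulator profile built by Algorithm 2 (for a fixed iteration whose set is `H`)
after the given number of stages: at each stage one more vote is appended, built from the
current social ranking `F(p⃗ ∪ p⃗_M)`. -/
def stageProfile (sc : ℕ → ℤ) (tb : O → ℕ) (P : List (O → ℕ)) (H : Finset O) :
    ℕ → List (O → ℕ)
  | 0 => []
  | n + 1 =>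
      stageProfile sc tb P H n ++
        [buildVote (swf sc tb (P ++ stageProfile sc tb P H n)) H]

/-- The vote constructed by Algorithm 2 at stage `ℓ` (1-indexed). -/
def stageVote (sc : ℕ → ℤ) (tb : O → ℕ) (P : List (O → ℕ)) (H : Finset O) (ℓ : ℕ) :
    O → ℕ :=
  buildVote (swf sc tb (P ++ stageProfile sc tb P H (ℓ - 1))) H

/-- The sets `U^i_s`:  `U^i_0` consists of the member of `H^i` with the lowest position in
`p_t`, and `U^i_{s+1}` adds every candidate ranked above some member of `U^i_s` by the
stage-`l` vote (`1 ≤ l < k`) but below some member of `U^i_s` by the stage-`(l+1)` vote. -/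
noncomputable def Uaux (sc : ℕ → ℤ) (tb : O → ℕ) (P : List (O → ℕ)) (pt : O → ℕ)
    (H : Finset O) (k : ℕ) : ℕ → Finset O
  | 0 => botWithin pt H 1
  | s + 1 =>
      Uaux sc tb P pt H k s ∪
        univ.filter fun u =>
          ∃ l, 1 ≤ l ∧ l < k ∧
            (∃ u' ∈ Uaux sc tb P pt H k s,
              stageVote sc tb P H l u' < stageVote sc tb P H l u) ∧
            (∃ u' ∈ Uaux sc tb P pt H k s,
              stageVote sc tb P H (l + 1) u < stageVote sc tb P H (l + 1) u')

/-- `U^i = ⋃ₛ U^i_s`. -/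
noncomputable def Uset (sc : ℕ → ℤ) (tb : O → ℕ) (P : List (O → ℕ)) (pt : O → ℕ)
    (H : Finset O) (k : ℕ) : Finset O :=
  univ.filter fun u => ∃ s, u ∈ Uaux sc tb P pt H k s

/-- The sets `D^i_s`: `D^i_0` consists of the member of `O ∖ H^i` with the highest position
in `p_t`, and `D^i_{s+1}` adds every candidate ranked below some member of `D^i_s` by the
stage-`l` vote (`1 ≤ l < k`) but above some member of `D^i_s` by the stage-`(l+1)` vote. -/
noncomputable def Daux (sc : ℕ → ℤ) (tb : O → ℕ) (P : List (O → ℕ)) (pt : O → ℕ)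
    (H : Finset O) (k : ℕ) : ℕ → Finset O
  | 0 => topWithin pt (univ \ H) 1
  | s + 1 =>
      Daux sc tb P pt H k s ∪
        univ.filter fun d =>
          ∃ l, 1 ≤ l ∧ l < k ∧
            (∃ d' ∈ Daux sc tb P pt H k s,
              stageVote sc tb P H l d < stageVote sc tb P H l d') ∧
            (∃ d' ∈ Daux sc tb P pt H k s,
              stageVote sc tb P H (l + 1) d' < stageVote sc tb P H (l + 1) d)

/-- `D^i = ⋃ₛ D^i_s`. -/
noncomputable def Dset (sc : ℕ → ℤ) (tb : O → ℕ) (P : List (O → ℕ)) (pt : O → ℕ)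
    (H : Finset O) (k : ℕ) : Finset O :=
  univ.filter fun d => ∃ s, d ∈ Daux sc tb P pt H k s

/-- The Borda scoring vector `(m-1, m-2, …, 1, 0)`: position `j` gets `j` points. -/
def bordaVec : ℕ → ℤ := fun j => (j : ℤ)

/-- The `x`-approval scoring vector for `m` candidates: the `x` highest positions get one
point, the rest get zero. -/
def approvalVec (m x : ℕ) : ℕ → ℤ := fun j => if m ≤ j + x then 1 else 0

/-- `sc` is a scoring vector for `m` candidates: `s_{m-1} ≥ … ≥ s_0 ≥ 0` and
`s_{m-1} > s_0`. -/
def IsScoringVector (m : ℕ) (sc : ℕ → ℤ) : Prop :=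
  (∀ j, j + 1 < m → sc j ≤ sc (j + 1)) ∧ 0 ≤ sc 0 ∧ sc 0 < sc (m - 1)

/-- Algorithm 1 (constructive single-voter manipulation) returns the vote `pa`:
the guard `pos(p, p_o) ≥ ⌈m/2⌉` holds and `pa` is the vote built at the first iteration
`i ∈ {1, …, ⌈m/2⌉}` at which the manipulation check succeeds. -/
def alg1Returns (sc : ℕ → ℤ) (tb : O → ℕ) (P : List (O → ℕ)) (po : O → ℕ) (p : O)
    (pa : O → ℕ) : Prop :=
  (Fintype.card O + 1) / 2 ≤ po p ∧
    ∃ i, 1 ≤ i ∧ i ≤ (Fintype.card O + 1) / 2 ∧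
      pa = buildVote (swf sc tb P) (Hset (swf sc tb P) po p i) ∧
      RC (swf sc tb (P ++ [pa])) po = {p} ∧
      ∀ j, 1 ≤ j → j < i →
        RC (swf sc tb (P ++ [buildVote (swf sc tb P) (Hset (swf sc tb P) po p j)])) po ≠
          {p}

/-- Algorithm 2 (constructive coalitional manipulation) run with `k` manipulators returns
the profile `PM`: the guard `pos(p, p_o) ≥ ⌈m/2⌉` holds and `PM` is the `k`-stage profile
built at the first iteration `i ∈ {1, …, ⌈m/2⌉}` at which the manipulation check succeeds. -/
def alg2Returns (sc : ℕ → ℤ) (tb : O → ℕ) (P : List (O → ℕ)) (po : O → ℕ) (p : O)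
    (k : ℕ) (PM : List (O → ℕ)) : Prop :=
  (Fintype.card O + 1) / 2 ≤ po p ∧
    ∃ i, 1 ≤ i ∧ i ≤ (Fintype.card O + 1) / 2 ∧
      PM = stageProfile sc tb P (Hset (swf sc tb P) po p i) k ∧
      RC (swf sc tb (P ++ PM)) po = {p} ∧
      ∀ j, 1 ≤ j → j < i →
        RC (swf sc tb (P ++ stageProfile sc tb P (Hset (swf sc tb P) po p j) k)) po ≠ {p}

/-- The modified Algorithm 1 (destructive single-voter manipulation) returns the vote
`pa`: the guard `pos(e, p_o) < ⌊m/2⌋` fails and `pa` is the vote built at the first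
iteration `i ∈ {1, …, ⌈m/2⌉}` at which `e` is excluded from the Rational Compromise. -/
def alg1ReturnsD (sc : ℕ → ℤ) (tb : O → ℕ) (P : List (O → ℕ)) (po : O → ℕ) (e : O)
    (pa : O → ℕ) : Prop :=
  Fintype.card O / 2 ≤ po e ∧
    ∃ i, 1 ≤ i ∧ i ≤ (Fintype.card O + 1) / 2 ∧
      pa = buildVote (swf sc tb P) (HsetD (swf sc tb P) po e i) ∧
      e ∉ RC (swf sc tb (P ++ [pa])) po ∧
      ∀ j, 1 ≤ j → j < i →
        e ∈ RC (swf sc tb (P ++ [buildVote (swf sc tb P) (HsetD (swf sc tb P) po e j)])) po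

/-- The modified Algorithm 2 (destructive coalitional manipulation) run with `k`
manipulators returns the profile `PM`: the guard `pos(e, p_o) < ⌊m/2⌋` fails and `PM` is
the `k`-stage profile built at the first iteration `i ∈ {1, …, ⌈m/2⌉}` at which `e` is
excluded from the Rational Compromise. -/
def alg2ReturnsD (sc : ℕ → ℤ) (tb : O → ℕ) (P : List (O → ℕ)) (po : O → ℕ) (e : O)
    (k : ℕ) (PM : List (O → ℕ)) : Prop :=
  Fintype.card O / 2 ≤ po e ∧
    ∃ i, 1 ≤ i ∧ i ≤ (Fintype.card O + 1) / 2 ∧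
      PM = stageProfile sc tb P (HsetD (swf sc tb P) po e i) k ∧
      e ∉ RC (swf sc tb (P ++ PM)) po ∧
      ∀ j, 1 ≤ j → j < i →
        e ∈ RC (swf sc tb (P ++ stageProfile sc tb P (HsetD (swf sc tb P) po e j) k)) po

/-- The set `U^i` arising from running the `k` stages of Algorithm 2 at iteration `i`. -/
noncomputable def UsetAlg (sc : ℕ → ℤ) (tb : O → ℕ) (P : List (O → ℕ)) (po : O → ℕ)
    (p : O) (i k : ℕ) : Finset O :=
  Uset sc tb P (swf sc tb P) (Hset (swf sc tb P) po p i) k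

/-- The set `D^i` arising from running the `k` stages of Algorithm 2 at iteration `i`. -/
noncomputable def DsetAlg (sc : ℕ → ℤ) (tb : O → ℕ) (P : List (O → ℕ)) (po : O → ℕ)
    (p : O) (i k : ℕ) : Finset O :=
  Dset sc tb P (swf sc tb P) (Hset (swf sc tb P) po p i) k

/-- The vote constructed at stage `ℓ` of iteration `i` of Algorithm 2. -/
def stageVoteAlg (sc : ℕ → ℤ) (tb : O → ℕ) (P : List (O → ℕ)) (po : O → ℕ)
    (p : O) (i ℓ : ℕ) : O → ℕ :=
  stageVote sc tb P (Hset (swf sc tb P) po p i) ℓ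

/-- `s_ℓ(c)`: the total score of candidate `c` in `F(p⃗ ∪ p⃗_M)` after stage `ℓ` of
iteration `i` of Algorithm 2. -/
def stageScoreAlg (sc : ℕ → ℤ) (tb : O → ℕ) (P : List (O → ℕ)) (po : O → ℕ)
    (p : O) (i ℓ : ℕ) (c : O) : ℤ :=
  score sc (P ++ stageProfile sc tb P (Hset (swf sc tb P) po p i) ℓ) c

/-- `F(p⃗ ∪ p⃗_M)` after stage `ℓ` of iteration `i` of Algorithm 2. -/
def stageSwfAlg (sc : ℕ → ℤ) (tb : O → ℕ) (P : List (O → ℕ)) (po : O → ℕ)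
    (p : O) (i ℓ : ℕ) : O → ℕ :=
  swf sc tb (P ++ stageProfile sc tb P (Hset (swf sc tb P) po p i) ℓ)

/-- The outcome `x_{i+1}` of the constructive reduction. -/
def xOut (n : ℕ) (i : Fin n) : Fin n ⊕ Fin (n + 1) ⊕ Fin 3 := Sum.inl i
/-- The outcome `y_{j+1}` of the constructive reduction. -/
def yOut (n : ℕ) (j : Fin (n + 1)) : Fin n ⊕ Fin (n + 1) ⊕ Fin 3 := Sum.inr (Sum.inl j)
/-- The outcome `a` of the constructive reduction. -/
def aOut (n : ℕ) : Fin n ⊕ Fin (n + 1) ⊕ Fin 3 := Sum.inr (Sum.inr 0)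
/-- The outcome `b` of the constructive reduction. -/
def bOut (n : ℕ) : Fin n ⊕ Fin (n + 1) ⊕ Fin 3 := Sum.inr (Sum.inr 1)
/-- The outcome `c` of the constructive reduction. -/
def cOut (n : ℕ) : Fin n ⊕ Fin (n + 1) ⊕ Fin 3 := Sum.inr (Sum.inr 2)

/-- `F(p⃗) = (y_1, …, y_{n+1}, b, x_1, …, x_n, a, c)` as a position function
(`m = 2n + 4`, most preferred has position `m − 1 = 2n + 3`). -/
def ptTarget3 (n : ℕ) : Fin n ⊕ Fin (n + 1) ⊕ Fin 3 → ℕ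
  | Sum.inl i => n + 1 - (i : ℕ)
  | Sum.inr (Sum.inl j) => 2 * n + 3 - (j : ℕ)
  | Sum.inr (Sum.inr t) => if (t : ℕ) = 0 then 1 else if (t : ℕ) = 1 then n + 2 else 0

/-- `p_o = (x_1, …, x_n, b, a, c, y_1, …, y_{n+1})` as a position function. -/
def poVote3 (n : ℕ) : Fin n ⊕ Fin (n + 1) ⊕ Fin 3 → ℕ
  | Sum.inl i => 2 * n + 3 - (i : ℕ)
  | Sum.inr (Sum.inl j) => n - (j : ℕ)
  | Sum.inr (Sum.inr t) => if (t : ℕ) = 0 then n + 2 else if (t : ℕ) = 1 then n + 3 else n + 1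

/-!
The Rational Compromise consists of the outcomes maximizing the worse of their two positions, so
for it to be `{a}` every outcome that `p_o` puts above `a`, namely `b` and the `x_i`, must end up
socially below `a`. Overtaking `b` forces both manipulators to put `a` first and `b` last; the final
score of `a` is then `4 n + 6 + C`, so the points `x_i` gets from the two votes sum to at most
`X_i`. In each vote these are `n` distinct positive integers, hence at least `1 + ⋯ + n` in total,
while the `X_i` sum to `2 (1 + ⋯ + n)`. So all the inequalities are equalities and both votes
permute `1, …, n` on the `x_i`. Conversely, given such permutations, `a` can be brought to a tie
with `b` and the `x_i`, which it wins, and only the `n + 1` outcomes `y_j` stay above `a`: it has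
position `n + 2` in both rankings, and every other outcome is lower in one of them.
-/

section SumOfDistinct

lemma sum_range_card_add_card_sdiff_le_sum (s : Finset ℕ) :
    ∑ k ∈ range #s, k + #(s \ range #s) ≤ ∑ k ∈ s, k := by
  set r := range #s
  have card_eq : #(r \ s) = #(s \ r) := card_sdiff_comm (card_range _)
  have hs : ∑ k ∈ s ∩ r, k + ∑ k ∈ s \ r, k = ∑ k ∈ s, k := sum_inter_add_sum_sdiff s r _
  have hr : ∑ k ∈ s ∩ r, k + ∑ k ∈ r \ s, k = ∑ k ∈ r, k := by
    rw [inter_comm, sum_inter_add_sum_sdiff]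
  have outside : #(s \ r) * #s ≤ ∑ k ∈ s \ r, k :=
    card_nsmul_le_sum _ _ _ fun k hk => by simp_all [r]
  have inside : ∑ k ∈ r \ s, (k + 1) ≤ #(r \ s) * #s :=
    sum_le_card_nsmul _ _ _ fun k hk => by simp_all [r]
  rw [sum_add_distrib, sum_const, smul_eq_mul, mul_one, card_eq] at inside
  omega

lemma sum_range_add_card_image_sdiff_le_sum {n : ℕ} {f : Fin n → ℕ}
    (hf : Function.Injective f) :
    ∑ k ∈ range n, k + #(univ.image f \ range n) ≤ ∑ i, f i := by
  simpa [card_image_of_injective _ hf, sum_image hf.injOn] using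
    sum_range_card_add_card_sdiff_le_sum (univ.image f)

lemma sum_range_le_sum_of_injective {n : ℕ} {f : Fin n → ℕ} (hf : Function.Injective f) :
    ∑ k ∈ range n, k ≤ ∑ i, f i :=
  (Nat.le_add_right _ _).trans (sum_range_add_card_image_sdiff_le_sum hf)

lemma exists_perm_of_sum_le_sum_range {n : ℕ} {f : Fin n → ℕ} (hf : Function.Injective f)
    (hsum : ∑ i, f i ≤ ∑ k ∈ range n, k) : ∃ σ : Equiv.Perm (Fin n), ∀ i, (σ i : ℕ) = f i := by
  have hcard : #(univ.image f \ range n) = 0 := by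
    have := sum_range_add_card_image_sdiff_le_sum hf
    omega
  have himage : univ.image f ⊆ range n := sdiff_eq_empty_iff_subset.mp (card_eq_zero.mp hcard)
  have hlt (i : Fin n) : f i < n := mem_range.mp (himage (mem_image_of_mem f (mem_univ i)))
  have hinj : Function.Injective fun i => (⟨f i, hlt i⟩ : Fin n) :=
    fun i j hij => hf (Fin.ext_iff.mp hij)
  exact ⟨Equiv.ofBijective _ (Finite.injective_iff_bijective.mp hinj), fun _ => rfl⟩

lemma exists_perm_add_perm_eq {n : ℕ} {f g X : Fin n → ℕ} (hf : Function.Injective f)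
    (hg : Function.Injective g) (hle : ∀ i, (f i + 1) + (g i + 1) ≤ X i)
    (hX : ∑ i, X i ≤ n * (n + 1)) :
    ∃ σ π : Equiv.Perm (Fin n), ∀ i, ((σ i : ℕ) + 1) + ((π i : ℕ) + 1) = X i := by
  have gauss : (∑ k ∈ range n, k) * 2 + 2 * n = n * (n + 1) := by
    have := sum_range_id_mul_two (n + 1)
    rw [sum_range_succ, Nat.add_sub_cancel] at this
    linarith
  have sum_split : ∑ i, ((f i + 1) + (g i + 1)) = ∑ i, f i + ∑ i, g i + 2 * n := by
    simp only [sum_add_distrib, sum_const, card_univ, Fintype.card_fin, smul_eq_mul, mul_one]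
    ring
  have sum_le : ∑ i, ((f i + 1) + (g i + 1)) ≤ ∑ i, X i := sum_le_sum fun i _ => hle i
  have f_ge := sum_range_le_sum_of_injective hf
  have g_ge := sum_range_le_sum_of_injective hg
  obtain ⟨σ, hσ⟩ := exists_perm_of_sum_le_sum_range hf (by omega)
  obtain ⟨π, hπ⟩ := exists_perm_of_sum_le_sum_range hg (by omega)
  have sum_eq : ∑ i, ((f i + 1) + (g i + 1)) = ∑ i, X i := by omega
  refine ⟨σ, π, fun i => ?_⟩
  rw [hσ, hπ]
  exact (sum_eq_sum_iff_of_le fun i _ => hle i).mp sum_eq i (mem_univ i)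

end SumOfDistinct

section SocialOrder

variable {α : Type*} {sc : ℕ → ℤ} {tb : α → ℕ} {P : List (α → ℕ)} {c d : α}

lemma score_bordaVec_append_pair (P : List (α → ℕ)) (q r : α → ℕ) (c : α) :
    score bordaVec (P ++ [q, r]) c = score bordaVec P c + ((q c : ℤ) + (r c : ℤ)) := by
  simp [score, bordaVec]

/-- The key by which `swf` sorts the candidates: the total score first, then the tie-breaking
value, dualized since a smaller `tb`-value is better. -/
def socialKey (sc : ℕ → ℤ) (tb : α → ℕ) (P : List (α → ℕ)) (c : α) : ℤ ×ₗ ℕᵒᵈ :=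
  toLex (score sc P c, OrderDual.toDual (tb c))

lemma socialKey_lt_socialKey_iff :
    socialKey sc tb P c < socialKey sc tb P d ↔
      score sc P c < score sc P d ∨ (score sc P c = score sc P d ∧ tb d < tb c) := by
  rw [socialKey, socialKey, Prod.Lex.toLex_lt_toLex, OrderDual.toDual_lt_toDual]

variable [Fintype α]

lemma card_filter_lt_lt_card_filter_lt_iff {β : Type*} [LinearOrder β] (f : α → β) (a b : α) :
    #{x | f x < f a} < #{x | f x < f b} ↔ f a < f b := by
  constructor
  · intro h
    by_contra! hba
    exact h.not_ge (card_le_card (monotone_filter_right _ fun x _ hx => hx.trans_le hba))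
  · intro hab
    refine card_lt_card ((ssubset_iff_of_subset ?_).mpr ⟨a, by simpa using hab, by simp⟩)
    exact monotone_filter_right _ fun x _ hx => hx.trans hab

lemma swf_eq_card_socialKey_lt :
    swf sc tb P c = #{c' | socialKey sc tb P c' < socialKey sc tb P c} := by
  simp only [swf, socialKey_lt_socialKey_iff]

lemma swf_lt_swf_iff :
    swf sc tb P c < swf sc tb P d ↔
      score sc P c < score sc P d ∨ (score sc P c = score sc P d ∧ tb d < tb c) := by
  rw [swf_eq_card_socialKey_lt, swf_eq_card_socialKey_lt, card_filter_lt_lt_card_filter_lt_iff,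
    socialKey_lt_socialKey_iff]

lemma swf_eq_card_swf_lt : swf sc tb P c = #{c' | swf sc tb P c' < swf sc tb P c} := by
  simp only [swf_lt_swf_iff]
  rfl

lemma score_le_of_swf_lt (h : swf sc tb P c < swf sc tb P d) : score sc P c ≤ score sc P d :=
  (swf_lt_swf_iff.mp h).elim le_of_lt fun h => h.1.le

lemma swf_lt_card (sc : ℕ → ℤ) (tb : α → ℕ) (P : List (α → ℕ)) (c : α) :
    swf sc tb P c < Fintype.card α :=
  card_lt_univ_of_notMem (x := c) (by simp)

lemma IsVote.exists_injective_add_one_eq {p : α → ℕ} (hp : IsVote p) {b : α} (hb : p b = 0)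
    {ι : Type*} {x : ι → α} (hx : Function.Injective x) (hxb : ∀ i, x i ≠ b) :
    ∃ f : ι → ℕ, Function.Injective f ∧ ∀ i, p (x i) = f i + 1 := by
  have hpos (i : ι) : p (x i) ≠ 0 := fun h => hxb i (hp.1 (h.trans hb.symm))
  choose f hf using fun i => Nat.exists_eq_succ_of_ne_zero (hpos i)
  refine ⟨f, fun i j hij => hx (hp.1 ?_), hf⟩
  rw [hf, hf, hij]

end SocialOrder

section RationalCompromise

variable {pt po : O → ℕ} {a o : O}

lemma mem_topSet_inter_topSet_iff {j : ℕ} :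
    o ∈ topSet pt j ∩ topSet po j ↔ Fintype.card O - j ≤ min (pt o) (po o) := by
  simp [topSet]

lemma mem_RC_iff (hpt : ∀ o, pt o < Fintype.card O) :
    o ∈ RC pt po ↔ ∀ o', min (pt o') (po o') ≤ min (pt o) (po o) := by
  have : Nonempty O := ⟨o⟩
  obtain ⟨w, hw⟩ := Finite.exists_max fun o => min (pt o) (po o)
  have hw_card : min (pt w) (po w) < Fintype.card O := (min_le_left _ _).trans_lt (hpt w)
  have index_eq : rcIndex pt po = Fintype.card O - min (pt w) (po w) := by
    refine IsLeast.csInf_eq ⟨⟨by omega, w, ?_⟩, fun j ⟨_, o', ho'⟩ => ?_⟩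
    · rw [mem_topSet_inter_topSet_iff]
      omega
    · rw [mem_topSet_inter_topSet_iff] at ho'
      have := hw o'
      omega
  rw [RC, mem_topSet_inter_topSet_iff, index_eq, Nat.sub_sub_self hw_card.le]
  exact ⟨fun h o' => (hw o').trans h, fun h => h w⟩

lemma RC_eq_singleton_iff (hpt : ∀ o, pt o < Fintype.card O) :
    RC pt po = {a} ↔ ∀ o ≠ a, min (pt o) (po o) < min (pt a) (po a) := by
  simp only [eq_singleton_iff_unique_mem, mem_RC_iff hpt]
  constructor
  · rintro ⟨ha, huniq⟩ o hoa
    exact (ha o).lt_of_ne fun heq => hoa (huniq o fun o' => heq ▸ ha o')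
  · intro h
    refine ⟨fun o => ?_, fun o ho => ?_⟩
    · rcases eq_or_ne o a with rfl | hoa
      exacts [le_rfl, (h o hoa).le]
    · by_contra hoa
      exact (h o hoa).not_ge (ho a)

lemma lt_of_RC_eq_singleton (hpt : ∀ o, pt o < Fintype.card O) (hRC : RC pt po = {a})
    (hoa : o ≠ a) (hle : po a ≤ po o) : pt o < pt a := by
  have := (RC_eq_singleton_iff hpt).mp hRC o hoa
  omega

end RationalCompromise

section Reduction

/-- The outcome set of the constructive reduction, consisting of the `x_i`, the `y_j` and
`a, b, c`. -/
abbrev Outcome (n : ℕ) : Type := Fin n ⊕ Fin (n + 1) ⊕ Fin 3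

variable {n : ℕ}

lemma card_outcome (n : ℕ) : Fintype.card (Outcome n) = 2 * n + 4 := by
  simp only [Fintype.card_sum, Fintype.card_fin]
  ring

lemma forall_outcome_iff {p : Outcome n → Prop} :
    (∀ o, p o) ↔ (∀ i, p (xOut n i)) ∧ (∀ j, p (yOut n j)) ∧
      p (aOut n) ∧ p (bOut n) ∧ p (cOut n) := by
  simp only [Sum.forall, Fin.forall_fin_succ (n := 2), Fin.forall_fin_two]
  rfl

lemma poVote3_aOut : poVote3 n (aOut n) = n + 2 := rfl

lemma poVote3_aOut_le_bOut : poVote3 n (aOut n) ≤ poVote3 n (bOut n) := Nat.le_succ _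

lemma poVote3_aOut_le_xOut (i : Fin n) : poVote3 n (aOut n) ≤ poVote3 n (xOut n i) := by
  rw [poVote3_aOut, xOut, poVote3]
  omega

lemma poVote3_yOut_lt_aOut (j : Fin (n + 1)) : poVote3 n (yOut n j) < poVote3 n (aOut n) := by
  rw [poVote3_aOut, yOut, poVote3]
  omega

lemma exists_perm_of_RC_eq_singleton {X : Fin n → ℕ} (hXsum : ∑ i, X i ≤ n * (n + 1)) {C : ℤ}
    {tb : Outcome n → ℕ} {P : List (Outcome n → ℕ)}
    (hsb : score bordaVec P (bOut n) = 4 * (n : ℤ) + 6 + C)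
    (hsx : ∀ i, score bordaVec P (xOut n i) = 4 * (n : ℤ) + 6 + C - (X i : ℤ))
    (hsa : score bordaVec P (aOut n) = C) {q r : Outcome n → ℕ} (hq : IsVote q) (hr : IsVote r)
    (hRC : RC (swf bordaVec tb (P ++ [q, r])) (poVote3 n) = {aOut n}) :
    ∃ σ π : Equiv.Perm (Fin n), ∀ i, ((σ i : ℕ) + 1) + ((π i : ℕ) + 1) = X i := by
  have score_le {o : Outcome n} (hoa : o ≠ aOut n) (hpo : poVote3 n (aOut n) ≤ poVote3 n o) :
      score bordaVec P o + ((q o : ℤ) + r o) ≤ C + (q (aOut n) + r (aOut n)) := by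
    rw [← hsa, ← score_bordaVec_append_pair, ← score_bordaVec_append_pair]
    exact score_le_of_swf_lt (lt_of_RC_eq_singleton (swf_lt_card _ _ _) hRC hoa hpo)
  have b_le := score_le (o := bOut n) (by simp [aOut, bOut]) poVote3_aOut_le_bOut
  have x_le (i : Fin n) := score_le (o := xOut n i) (by simp [aOut, xOut]) (poVote3_aOut_le_xOut i)
  have qa_lt := hq.2 (aOut n)
  have ra_lt := hr.2 (aOut n)
  rw [card_outcome] at qa_lt ra_lt
  -- `a` trails `b` by `2 (2n + 3)` points, all that two votes can give.
  have qb_eq : q (bOut n) = 0 := by omega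
  have rb_eq : r (bOut n) = 0 := by omega
  have x_inj : Function.Injective (xOut n) := Sum.inl_injective
  have x_ne_b (i : Fin n) : xOut n i ≠ bOut n := Sum.inl_ne_inr
  obtain ⟨f, hf, hqf⟩ := hq.exists_injective_add_one_eq qb_eq x_inj x_ne_b
  obtain ⟨g, hg, hrg⟩ := hr.exists_injective_add_one_eq rb_eq x_inj x_ne_b
  refine exists_perm_add_perm_eq hf hg (fun i => ?_) hXsum
  have := x_le i
  rw [hsx] at this
  have := hqf i
  have := hrg i
  omega

lemma swf_aOut_eq {sc : ℕ → ℤ} {tb : Outcome n → ℕ} {P : List (Outcome n → ℕ)}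
    (hx : ∀ i, swf sc tb P (xOut n i) < swf sc tb P (aOut n))
    (hy : ∀ j, swf sc tb P (aOut n) < swf sc tb P (yOut n j))
    (hb : swf sc tb P (bOut n) < swf sc tb P (aOut n))
    (hc : swf sc tb P (cOut n) < swf sc tb P (aOut n)) : swf sc tb P (aOut n) = n + 2 := by
  have below_eq : ({o | swf sc tb P o < swf sc tb P (aOut n)} : Finset (Outcome n)) =
      univ.disjSum ((∅ : Finset (Fin (n + 1))).disjSum {1, 2}) := by
    simp only [Finset.ext_iff, mem_filter_univ, forall_outcome_iff, hx, hb, hc, (hy _).not_gt,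
      lt_irrefl]
    simp [xOut, yOut, aOut, bOut, cOut]
  rw [swf_eq_card_swf_lt, below_eq]
  simp

lemma RC_poVote3_eq_singleton {sc : ℕ → ℤ} {tb : Outcome n → ℕ} {P : List (Outcome n → ℕ)}
    (hx : ∀ i, swf sc tb P (xOut n i) < swf sc tb P (aOut n))
    (hy : ∀ j, swf sc tb P (aOut n) < swf sc tb P (yOut n j))
    (hb : swf sc tb P (bOut n) < swf sc tb P (aOut n))
    (hc : swf sc tb P (cOut n) < swf sc tb P (aOut n)) :
    RC (swf sc tb P) (poVote3 n) = {aOut n} := by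
  have swf_eq_poVote3 : swf sc tb P (aOut n) = poVote3 n (aOut n) := swf_aOut_eq hx hy hb hc
  rw [RC_eq_singleton_iff (swf_lt_card sc tb P), forall_outcome_iff, swf_eq_poVote3, min_self]
  rw [swf_eq_poVote3] at hx hb hc
  exact ⟨fun i _ => min_lt_of_left_lt (hx i),
    fun j _ => min_lt_of_right_lt (poVote3_yOut_lt_aOut j), fun h => (h rfl).elim,
    fun _ => min_lt_of_left_lt hb, fun _ => min_lt_of_left_lt hc⟩

/-- The vote `(a, y_{n+1}, …, y_1, c, x_{σ⁻¹(n)}, …, x_{σ⁻¹(1)}, b)` as a position function: the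
vote cast by a manipulator who uses the permutation `σ`. -/
def manipulatorVote (σ : Equiv.Perm (Fin n)) : Outcome n → ℕ
  | Sum.inl i => (σ i : ℕ) + 1
  | Sum.inr (Sum.inl j) => n + 2 + (j : ℕ)
  | Sum.inr (Sum.inr 0) => 2 * n + 3
  | Sum.inr (Sum.inr 1) => 0
  | Sum.inr (Sum.inr 2) => n + 1

section ManipulatorVote

variable (σ : Equiv.Perm (Fin n))

@[simp]
lemma manipulatorVote_xOut (i : Fin n) : manipulatorVote σ (xOut n i) = (σ i : ℕ) + 1 := rfl

@[simp]
lemma manipulatorVote_yOut (j : Fin (n + 1)) :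
    manipulatorVote σ (yOut n j) = n + 2 + (j : ℕ) := rfl

@[simp]
lemma manipulatorVote_aOut : manipulatorVote σ (aOut n) = 2 * n + 3 := rfl

@[simp]
lemma manipulatorVote_bOut : manipulatorVote σ (bOut n) = 0 := rfl

@[simp]
lemma manipulatorVote_cOut : manipulatorVote σ (cOut n) = n + 1 := rfl

lemma isVote_manipulatorVote : IsVote (manipulatorVote σ) := by
  have σ_inj (i k : Fin n) (h : (σ i : ℕ) = σ k) : i = k := σ.injective (Fin.ext h)
  simp only [IsVote, Function.Injective, forall_outcome_iff, card_outcome, manipulatorVote_xOut,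
    manipulatorVote_yOut, manipulatorVote_aOut, manipulatorVote_bOut, manipulatorVote_cOut]
  and_intros <;> intros <;> grind

end ManipulatorVote

/-- The two votes lift `a` to `4 n + 6 + C` and give at least `2 (n + 2)` points to each `y_j` and
`2 (n + 1)` to `c`, whence the bounds on the initial scores of the `y_j` and of `c`. -/
lemma RC_append_manipulatorVote_eq_singleton {X : Fin n → ℕ} {C : ℤ} {tb : Outcome n → ℕ}
    (htbab : tb (aOut n) < tb (bOut n)) (htbax : ∀ i, tb (aOut n) < tb (xOut n i))
    {P : List (Outcome n → ℕ)}
    (hsy : ∀ j, 2 * (n : ℤ) + 2 + C < score bordaVec P (yOut n j))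
    (hsb : score bordaVec P (bOut n) = 4 * (n : ℤ) + 6 + C)
    (hsx : ∀ i, score bordaVec P (xOut n i) = 4 * (n : ℤ) + 6 + C - (X i : ℤ))
    (hsa : score bordaVec P (aOut n) = C)
    (hsc : score bordaVec P (cOut n) < 2 * (n : ℤ) + 4 + C) {σ π : Equiv.Perm (Fin n)}
    (hX : ∀ i, ((σ i : ℕ) + 1) + ((π i : ℕ) + 1) = X i) :
    RC (swf bordaVec tb (P ++ [manipulatorVote σ, manipulatorVote π])) (poVote3 n) =
      {aOut n} := by
  have score_eq := score_bordaVec_append_pair P (manipulatorVote σ) (manipulatorVote π)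
  generalize P ++ [manipulatorVote σ, manipulatorVote π] = Q at score_eq ⊢
  have score_a : score bordaVec Q (aOut n) = 4 * (n : ℤ) + 6 + C := by
    simp only [score_eq, hsa, manipulatorVote_aOut]
    push_cast
    ring
  have score_b : score bordaVec Q (bOut n) = 4 * (n : ℤ) + 6 + C := by
    simp [score_eq, hsb]
  have score_x (i : Fin n) : score bordaVec Q (xOut n i) = 4 * (n : ℤ) + 6 + C := by
    simp [score_eq, hsx, ← hX]
  have score_y (j : Fin (n + 1)) : 4 * (n : ℤ) + 6 + C < score bordaVec Q (yOut n j) := by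
    have := hsy j
    rw [score_eq, manipulatorVote_yOut, manipulatorVote_yOut]
    omega
  have score_c : score bordaVec Q (cOut n) < 4 * (n : ℤ) + 6 + C := by
    rw [score_eq, manipulatorVote_cOut, manipulatorVote_cOut]
    omega
  exact RC_poVote3_eq_singleton
    (fun i => swf_lt_swf_iff.mpr (Or.inr ⟨(score_x i).trans score_a.symm, htbax i⟩))
    (fun j => swf_lt_swf_iff.mpr (Or.inl (score_a.trans_lt (score_y j))))
    (swf_lt_swf_iff.mpr (Or.inr ⟨score_b.trans score_a.symm, htbab⟩))
    (swf_lt_swf_iff.mpr (Or.inl (score_c.trans_eq score_a.symm)))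

end Reduction

theorem constructive_borda_reduction_correct_general
    {n : ℕ} {X : Fin n → ℕ} (hXsum : ∑ i, X i ≤ n * (n + 1)) {C : ℤ} {tb : Outcome n → ℕ}
    (htbab : tb (aOut n) < tb (bOut n)) (htbax : ∀ i, tb (aOut n) < tb (xOut n i))
    {P : List (Outcome n → ℕ)}
    (hsy : ∀ j, 2 * (n : ℤ) + 2 + C < score bordaVec P (yOut n j))
    (hsb : score bordaVec P (bOut n) = 4 * (n : ℤ) + 6 + C)
    (hsx : ∀ i, score bordaVec P (xOut n i) = 4 * (n : ℤ) + 6 + C - (X i : ℤ))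
    (hsa : score bordaVec P (aOut n) = C)
    (hsc : score bordaVec P (cOut n) < 2 * (n : ℤ) + 4 + C) :
    (∃ PM : List (Outcome n → ℕ), PM.length = 2 ∧ (∀ q ∈ PM, IsVote q) ∧
        RC (swf bordaVec tb (P ++ PM)) (poVote3 n) = {aOut n}) ↔
      ∃ σ π : Equiv.Perm (Fin n), ∀ i, ((σ i : ℕ) + 1) + ((π i : ℕ) + 1) = X i := by
  constructor
  · rintro ⟨PM, hlen, hvote, hRC⟩
    obtain ⟨q, r, rfl⟩ := List.length_eq_two.mp hlen
    exact exists_perm_of_RC_eq_singleton hXsum hsb hsx hsa (hvote q (by simp))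
      (hvote r (by simp)) hRC
  · rintro ⟨σ, π, hX⟩
    refine ⟨[manipulatorVote σ, manipulatorVote π], rfl, by simp [isVote_manipulatorVote], ?_⟩
    exact RC_append_manipulatorVote_eq_singleton htbab htbax hsy hsb hsx hsa hsc hX

/-- correctness of the reduction for Theorem 3, NP-hardness of constructive
coalitional Borda manipulation: two Borda manipulator votes making `a` the unique
Rational Compromise outcome exist iff there are permutations `σ`, `π` of `{1, …, n}` with
`σ(i) + π(i) = X_i` for all `i`. -/
theorem constructive_borda_reduction_correct
    (n : ℕ) (hn : 1 ≤ n) (X : Fin n → ℕ) (hXpos : ∀ i, 1 ≤ X i) (hXmono : Monotone X)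
    (hXsum : ∑ i, X i = n * (n + 1)) (C z : ℤ) (hz : z ≤ C)
    (tb : (Fin n ⊕ Fin (n + 1) ⊕ Fin 3) → ℕ) (htb : Function.Injective tb)
    (htbab : tb (aOut n) < tb (bOut n)) (htbax : ∀ i, tb (aOut n) < tb (xOut n i))
    (P : List ((Fin n ⊕ Fin (n + 1) ⊕ Fin 3) → ℕ)) (hP : ∀ q ∈ P, IsVote q)
    (hsy : ∀ j, score bordaVec P (yOut n j) = 4 * (n : ℤ) + 7 + C)
    (hsb : score bordaVec P (bOut n) = 4 * (n : ℤ) + 6 + C)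
    (hsx : ∀ i, score bordaVec P (xOut n i) = 4 * (n : ℤ) + 6 + C - (X i : ℤ))
    (hsa : score bordaVec P (aOut n) = C)
    (hsc : score bordaVec P (cOut n) = z)
    (hF : swf bordaVec tb P = ptTarget3 n) :
    (∃ PM : List ((Fin n ⊕ Fin (n + 1) ⊕ Fin 3) → ℕ), PM.length = 2 ∧
        (∀ q ∈ PM, IsVote q) ∧
        RC (swf bordaVec tb (P ++ PM)) (poVote3 n) = {aOut n}) ↔
      ∃ σ π : Equiv.Perm (Fin n), ∀ i, ((σ i : ℕ) + 1) + ((π i : ℕ) + 1) = X i :=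
  constructive_borda_reduction_correct_general hXsum.le htbab htbax
    (fun j => by rw [hsy]; omega) hsb hsx hsa (by omega)
end

section
/- Lemma 2: fix an iteration i (1 ≤ i ≤ ⌈m/2⌉) of Algorithm 2 run with the x-approval rule. If every u ∈ U^i receives 1 point in each of the k stages, then |U^i| = 1. Similarly, if every d ∈ D^i receives 0 points in each of the k stages, then |D^i| = 1. -/
open Finset
open scoped Classical

variable {O : Type*} [Fintype O] [DecidableEq O]

/-!
A vote that gives two candidates the same number of points does not change their relative order in
the social ranking, and the next vote is built from that ranking alone; so the next vote ranks the
two in the same order as well. If `a` gets the maximal number of points at every stage, then so does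
any `u` ranked above `a`, hence no `u` ranked above `a` by one vote is ranked below `a` by the next,
and the closure defining `U^i` never leaves its starting singleton. Dually for `D^i` and the minimal
number of points.
-/

section Counting

variable {α β : Type*} [LinearOrder β] {f : α → β} {S : Finset α}

theorem card_filter_lt_lt_card_filter_lt_iff_s10 {a b : α} (ha : a ∈ S) :
    #{c ∈ S | f a < f c} < #{c ∈ S | f b < f c} ↔ f b < f a := by
  constructor
  · contrapose!
    exact fun hab => card_le_card (monotone_filter_right S fun _ _ hc => hab.trans_lt hc)
  · intro hba
    refine card_lt_card ((ssubset_iff_of_subset ?_).2 ⟨a, ?_, ?_⟩)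
    · exact monotone_filter_right S fun _ _ hc => hba.trans hc
    · exact mem_filter.2 ⟨ha, hba⟩
    · simp

theorem injOn_card_filter_lt (hf : Set.InjOn f S) :
    Set.InjOn (fun a => #{c ∈ S | f a < f c}) S := by
  intro a ha b hb hab
  refine hf ha hb (le_antisymm ?_ ?_)
  · exact not_lt.1 fun h => ((card_filter_lt_lt_card_filter_lt_iff_s10 ha).2 h).ne hab
  · exact not_lt.1 fun h => ((card_filter_lt_lt_card_filter_lt_iff_s10 hb).2 h).ne' hab

theorem image_card_filter_lt (hf : Set.InjOn f S) :
    S.image (fun a => #{c ∈ S | f a < f c}) = range #S := by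
  refine eq_of_subset_of_card_le (image_subset_iff.2 fun a ha => mem_range.2 ?_) ?_
  · exact card_lt_card (filter_ssubset.2 ⟨a, ha, lt_irrefl _⟩)
  · rw [card_range, card_image_of_injOn (injOn_card_filter_lt hf)]

theorem card_filter_card_filter_lt_lt (hf : Set.InjOn f S) (n : ℕ) :
    #{a ∈ S | #{c ∈ S | f a < f c} < n} = min n #S := by
  calc #{a ∈ S | #{c ∈ S | f a < f c} < n}
      = #({a ∈ S | #{c ∈ S | f a < f c} < n}.image fun a => #{c ∈ S | f a < f c}) :=
        (card_image_of_injOn ((injOn_card_filter_lt hf).mono (filter_subset _ _))).symm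
    _ = #{j ∈ range #S | j < n} := by rw [← image_card_filter_lt hf, filter_image]
    _ = #(range (min n #S)) := by congr 1; ext j; simp [and_comm]
    _ = min n #S := card_range _

theorem card_topWithin {r : α → ℕ} (hr : Set.InjOn r S) (n : ℕ) :
    #(topWithin r S n) = min n #S :=
  card_filter_card_filter_lt_lt hr n

theorem card_botWithin {r : α → ℕ} (hr : Set.InjOn r S) (n : ℕ) :
    #(botWithin r S n) = min n #S :=
  card_filter_card_filter_lt_lt (f := OrderDual.toDual ∘ r) hr n

end Counting

section SocialRanking

variable {α : Type*} {sc : ℕ → ℤ} {tb : α → ℕ} {P : List (α → ℕ)} {a b : α}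

/-- The lexicographic key by which `swf` ranks candidates: total score first, then the tie-breaking
value. The score is order-dualized, so that a smaller key means a better rank. -/
def rankKey (sc : ℕ → ℤ) (tb : α → ℕ) (P : List (α → ℕ)) (c : α) : ℤᵒᵈ ×ₗ ℕ :=
  toLex (OrderDual.toDual (score sc P c), tb c)

theorem rankKey_lt_rankKey_iff :
    rankKey sc tb P b < rankKey sc tb P a ↔
      score sc P a < score sc P b ∨ score sc P a = score sc P b ∧ tb b < tb a := by
  simp only [rankKey, Prod.Lex.toLex_lt_toLex, OrderDual.toDual_lt_toDual,
    OrderDual.toDual_inj, eq_comm]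

theorem rankKey_injective (htb : Function.Injective tb) :
    Function.Injective (rankKey sc tb P) :=
  fun _ _ h => htb (congrArg Prod.snd (toLex.injective h))

theorem score_append_singleton (q : α → ℕ) (c : α) :
    score sc (P ++ [q]) c = score sc P c + sc (q c) := by
  simp [score]

variable [Fintype α]

theorem swf_eq_card_filter_rankKey_lt (c : α) :
    swf sc tb P c = #{c' | rankKey sc tb P c < rankKey sc tb P c'} := by
  simp only [swf, rankKey_lt_rankKey_iff]

theorem swf_lt_swf_iff_s10 :
    swf sc tb P a < swf sc tb P b ↔ rankKey sc tb P b < rankKey sc tb P a := by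
  simp only [swf_eq_card_filter_rankKey_lt, mem_univ, card_filter_lt_lt_card_filter_lt_iff_s10]

theorem swf_injective (htb : Function.Injective tb) : Function.Injective (swf sc tb P) :=
  fun _ _ h => rankKey_injective htb <|
    le_antisymm (not_lt.1 fun hlt => (swf_lt_swf_iff_s10.2 hlt).ne h)
      (not_lt.1 fun hlt => (swf_lt_swf_iff_s10.2 hlt).ne' h)

theorem swf_append_singleton_lt_iff {q : α → ℕ} (h : sc (q a) = sc (q b)) :
    swf sc tb (P ++ [q]) a < swf sc tb (P ++ [q]) b ↔ swf sc tb P a < swf sc tb P b := by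
  simp only [swf_lt_swf_iff_s10, rankKey_lt_rankKey_iff, score_append_singleton, h,
    add_lt_add_iff_right, add_left_inj]

end SocialRanking

section ManipulatorVote

variable {r : O → ℕ} {H : Finset O} {a b : O}

theorem buildVote_of_mem (ha : a ∈ H) :
    buildVote r H a = #Hᶜ + #{h ∈ H | r a < r h} := by
  rw [buildVote, if_pos ha, card_compl]

theorem buildVote_of_notMem (ha : a ∉ H) : buildVote r H a = #{c ∈ Hᶜ | r a < r c} := by
  rw [buildVote, if_neg ha]
  congr 1
  ext c
  simp

theorem buildVote_lt_card_compl (ha : a ∉ H) : buildVote r H a < #Hᶜ := by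
  rw [buildVote_of_notMem ha]
  exact card_lt_card (filter_ssubset.2 ⟨a, mem_compl.2 ha, lt_irrefl _⟩)

theorem card_compl_le_buildVote (ha : a ∈ H) : #Hᶜ ≤ buildVote r H a :=
  buildVote_of_mem ha ▸ Nat.le_add_right _ _

theorem buildVote_lt_card (r : O → ℕ) (H : Finset O) (a : O) :
    buildVote r H a < Fintype.card O := by
  rw [← card_compl_add_card H]
  by_cases ha : a ∈ H
  · rw [buildVote_of_mem ha]
    exact Nat.add_lt_add_left (card_lt_card (filter_ssubset.2 ⟨a, ha, lt_irrefl (r a)⟩)) _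
  · exact (buildVote_lt_card_compl ha).trans_le (Nat.le_add_right _ _)

theorem buildVote_lt_buildVote_iff :
    buildVote r H a < buildVote r H b ↔ a ∉ H ∧ b ∈ H ∨ (a ∈ H ↔ b ∈ H) ∧ r b < r a := by
  by_cases ha : a ∈ H <;> by_cases hb : b ∈ H
  · simp [buildVote_of_mem, ha, hb, card_filter_lt_lt_card_filter_lt_iff_s10]
  · simpa [ha, hb] using (buildVote_lt_card_compl hb).le.trans (card_compl_le_buildVote ha)
  · simpa [ha, hb] using (buildVote_lt_card_compl ha).trans_le (card_compl_le_buildVote hb)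
  · simp [buildVote_of_notMem, ha, hb, card_filter_lt_lt_card_filter_lt_iff_s10]

end ManipulatorVote

section Stages

variable {sc : ℕ → ℤ} {tb : O → ℕ} {P : List (O → ℕ)} {pt : O → ℕ} {H : Finset O} {k l : ℕ}
  {a b : O}

theorem stageVote_succ_lt_iff (hl : 1 ≤ l)
    (h : sc (stageVote sc tb P H l a) = sc (stageVote sc tb P H l b)) :
    stageVote sc tb P H (l + 1) a < stageVote sc tb P H (l + 1) b ↔
      stageVote sc tb P H l a < stageVote sc tb P H l b := by
  obtain ⟨n, rfl⟩ := Nat.exists_eq_add_of_le' hl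
  have hswf : swf sc tb (P ++ stageProfile sc tb P H (n + 1)) b <
        swf sc tb (P ++ stageProfile sc tb P H (n + 1)) a ↔
      swf sc tb (P ++ stageProfile sc tb P H n) b <
        swf sc tb (P ++ stageProfile sc tb P H n) a := by
    rw [stageProfile, ← List.append_assoc]
    exact swf_append_singleton_lt_iff h.symm
  simp only [stageVote, Nat.add_sub_cancel, buildVote_lt_buildVote_iff, hswf]

theorem eq_top_points_of_stageVote_lt (hsc : MonotoneOn sc (Set.Iio (Fintype.card O)))
    (hab : stageVote sc tb P H l a < stageVote sc tb P H l b)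
    (ha : sc (stageVote sc tb P H l a) = sc (Fintype.card O - 1)) :
    sc (stageVote sc tb P H l b) = sc (Fintype.card O - 1) := by
  have hb : stageVote sc tb P H l b < Fintype.card O := buildVote_lt_card _ _ _
  refine le_antisymm (hsc hb (Nat.pred_lt_of_lt hb) (Nat.le_pred_of_lt hb)) ?_
  exact ha ▸ hsc (hab.trans hb) hb hab.le

theorem eq_bottom_points_of_stageVote_lt (hsc : MonotoneOn sc (Set.Iio (Fintype.card O)))
    (hab : stageVote sc tb P H l a < stageVote sc tb P H l b)
    (hb : sc (stageVote sc tb P H l b) = sc 0) :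
    sc (stageVote sc tb P H l a) = sc 0 := by
  have hbm : stageVote sc tb P H l b < Fintype.card O := buildVote_lt_card _ _ _
  refine le_antisymm (hb ▸ hsc (hab.trans hbm) hbm hab.le) ?_
  exact hsc (Nat.zero_lt_of_lt hbm) (hab.trans hbm) (Nat.zero_le _)

theorem Uaux_subset_Uset (s : ℕ) : Uaux sc tb P pt H k s ⊆ Uset sc tb P pt H k :=
  fun _ hu => mem_filter.2 ⟨mem_univ _, s, hu⟩

theorem Daux_subset_Dset (s : ℕ) : Daux sc tb P pt H k s ⊆ Dset sc tb P pt H k :=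
  fun _ hd => mem_filter.2 ⟨mem_univ _, s, hd⟩

theorem Uset_eq_singleton (hsc : MonotoneOn sc (Set.Iio (Fintype.card O)))
    (ha : botWithin pt H 1 = {a})
    (htop : ∀ l, 1 ≤ l → l < k → sc (stageVote sc tb P H l a) = sc (Fintype.card O - 1)) :
    Uset sc tb P pt H k = {a} := by
  have hUaux : ∀ s, Uaux sc tb P pt H k s = {a} := by
    intro s
    induction s with
    | zero => exact ha
    | succ s ih =>
      rw [Uaux, ih, union_eq_left]
      intro u hu
      simp only [mem_filter, mem_univ, true_and, mem_singleton, exists_eq_left] at hu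
      obtain ⟨l, hl, hlk, habove, hbelow⟩ := hu
      have hpoints := (eq_top_points_of_stageVote_lt hsc habove (htop l hl hlk)).trans
        (htop l hl hlk).symm
      exact absurd ((stageVote_succ_lt_iff hl hpoints).1 hbelow) habove.asymm
  ext u
  simp [Uset, hUaux]

theorem Dset_eq_singleton (hsc : MonotoneOn sc (Set.Iio (Fintype.card O)))
    (ha : topWithin pt (univ \ H) 1 = {a})
    (hbot : ∀ l, 1 ≤ l → l < k → sc (stageVote sc tb P H l a) = sc 0) :
    Dset sc tb P pt H k = {a} := by
  have hDaux : ∀ s, Daux sc tb P pt H k s = {a} := by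
    intro s
    induction s with
    | zero => exact ha
    | succ s ih =>
      rw [Daux, ih, union_eq_left]
      intro d hd
      simp only [mem_filter, mem_univ, true_and, mem_singleton, exists_eq_left] at hd
      obtain ⟨l, hl, hlk, hbelow, habove⟩ := hd
      have hpoints := (hbot l hl hlk).trans
        (eq_bottom_points_of_stageVote_lt hsc hbelow (hbot l hl hlk)).symm
      exact absurd ((stageVote_succ_lt_iff hl hpoints).1 habove) hbelow.asymm
  ext d
  simp [Dset, hDaux]

theorem card_Uset_eq_one (hsc : MonotoneOn sc (Set.Iio (Fintype.card O)))
    (hpt : Set.InjOn pt H) (hH : H.Nonempty)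
    (htop : ∀ u ∈ Uset sc tb P pt H k, ∀ l, 1 ≤ l → l < k →
      sc (stageVote sc tb P H l u) = sc (Fintype.card O - 1)) :
    #(Uset sc tb P pt H k) = 1 := by
  obtain ⟨a, ha⟩ : ∃ a, botWithin pt H 1 = {a} :=
    card_eq_one.1 ((card_botWithin hpt 1).trans (min_eq_left hH.card_pos))
  have haU : a ∈ Uset sc tb P pt H k :=
    Uaux_subset_Uset 0 (by rw [Uaux, ha]; exact mem_singleton_self a)
  rw [Uset_eq_singleton hsc ha (htop a haU), card_singleton]

theorem card_Dset_eq_one (hsc : MonotoneOn sc (Set.Iio (Fintype.card O)))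
    (hpt : Set.InjOn pt ↑(univ \ H)) (hH : H ≠ univ)
    (hbot : ∀ d ∈ Dset sc tb P pt H k, ∀ l, 1 ≤ l → l < k →
      sc (stageVote sc tb P H l d) = sc 0) :
    #(Dset sc tb P pt H k) = 1 := by
  have hne : (univ \ H).Nonempty := sdiff_nonempty.2 fun h => hH (univ_subset_iff.1 h)
  obtain ⟨a, ha⟩ : ∃ a, topWithin pt (univ \ H) 1 = {a} :=
    card_eq_one.1 ((card_topWithin hpt 1).trans (min_eq_left hne.card_pos))
  have haD : a ∈ Dset sc tb P pt H k :=
    Daux_subset_Dset 0 (by rw [Daux, ha]; exact mem_singleton_self a)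
  rw [Dset_eq_singleton hsc ha (hbot a haD), card_singleton]

end Stages

theorem card_Hset_le {pt : O → ℕ} (hpt : Function.Injective pt) (po : O → ℕ) (p : O) {i : ℕ}
    (hi : 1 ≤ i) : #(Hset pt po p i) ≤ i := by
  have hinsert := card_insert_le p (topWithin pt ((univ \ topSet po i).erase p) (i - 1))
  rw [card_topWithin hpt.injOn] at hinsert
  exact hinsert.trans (by omega)

theorem approvalVec_monotone (m x : ℕ) : Monotone (approvalVec m x) := by
  intro j j' hjj'
  simp only [approvalVec]
  split_ifs <;> omega

theorem approvalVec_pred {m x : ℕ} (hx : 1 ≤ x) : approvalVec m x (m - 1) = 1 :=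
  if_pos (by omega)

theorem approvalVec_zero {m x : ℕ} (hx : x < m) : approvalVec m x 0 = 0 :=
  if_neg (by omega)

theorem lemma2_singletons_general {sc : ℕ → ℤ}
    (hsc : MonotoneOn sc (Set.Iio (Fintype.card O))) {tb : O → ℕ}
    (htb : Function.Injective tb) (P : List (O → ℕ)) (po : O → ℕ) (p : O) {i : ℕ} (k : ℕ)
    (hi1 : 1 ≤ i) (hi2 : i < Fintype.card O) :
    ((∀ u ∈ UsetAlg sc tb P po p i k, ∀ ℓ, 1 ≤ ℓ → ℓ ≤ k →
          sc (stageVoteAlg sc tb P po p i ℓ u) = sc (Fintype.card O - 1)) →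
        #(UsetAlg sc tb P po p i k) = 1) ∧
      ((∀ d ∈ DsetAlg sc tb P po p i k, ∀ ℓ, 1 ≤ ℓ → ℓ ≤ k →
          sc (stageVoteAlg sc tb P po p i ℓ d) = sc 0) →
        #(DsetAlg sc tb P po p i k) = 1) := by
  have hpt : Function.Injective (swf sc tb P) := swf_injective htb
  have hH : Hset (swf sc tb P) po p i ≠ univ := fun h => by
    have hcard := card_Hset_le hpt po p hi1
    rw [h, card_univ] at hcard
    exact hcard.not_gt hi2
  exact ⟨fun htop => card_Uset_eq_one hsc hpt.injOn (insert_nonempty _ _)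
      fun u hu l hl hlk => htop u hu l hl hlk.le,
    fun hbot => card_Dset_eq_one hsc hpt.injOn hH
      fun d hd l hl hlk => hbot d hd l hl hlk.le⟩

/-- Lemma 2: at a fixed iteration `i` of Algorithm 2 with the x-approval
rule, if every `u ∈ U^i` receives one point at each of the `k` stages then `|U^i| = 1`,
and if every `d ∈ D^i` receives zero points at each of the `k` stages then `|D^i| = 1`. -/
theorem lemma2_singletons
    (x : ℕ) (hx1 : 1 ≤ x) (hx2 : x < Fintype.card O)
    (tb : O → ℕ) (P : List (O → ℕ)) (po : O → ℕ) (p : O) (i k : ℕ)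
    (htb : Function.Injective tb) (hP : ∀ q ∈ P, IsVote q) (hpo : IsVote po)
    (hi1 : 1 ≤ i) (hi2 : i ≤ (Fintype.card O + 1) / 2) :
    ((∀ u ∈ UsetAlg (approvalVec (Fintype.card O) x) tb P po p i k, ∀ ℓ, 1 ≤ ℓ → ℓ ≤ k →
          approvalVec (Fintype.card O) x
            (stageVoteAlg (approvalVec (Fintype.card O) x) tb P po p i ℓ u) = 1) →
        (UsetAlg (approvalVec (Fintype.card O) x) tb P po p i k).card = 1) ∧
      ((∀ d ∈ DsetAlg (approvalVec (Fintype.card O) x) tb P po p i k, ∀ ℓ, 1 ≤ ℓ → ℓ ≤ k →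
          approvalVec (Fintype.card O) x
            (stageVoteAlg (approvalVec (Fintype.card O) x) tb P po p i ℓ d) = 0) →
        (DsetAlg (approvalVec (Fintype.card O) x) tb P po p i k).card = 1) := by
  simpa only [approvalVec_pred hx1, approvalVec_zero hx2] using
    lemma2_singletons_general ((approvalVec_monotone (Fintype.card O) x).monotoneOn _) htb P po p
      k hi1 (by omega)
end
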